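/- Let X be an m×n matrix of indeterminates, L a one-sided ladder with distinguished points (a_1,b_1),...,(a_s,b_s) and sizes t = (t_1,...,t_s) satisfying t_k ≤ min{a_k, m-b_k+1} and b_{k-1}-b_k < t_k - t_{k-1} < a_k - a_{k-1}. Let L̃ be the one-sided ladder with lower outside corners (a_1 - t_1 + 1, b_1 + t_1 - 1),...,(a_s - t_s + 1, b_s + t_s - 1). Then the height of the mixed ladder determinantal ideal I_t(L) in K[L] equals the cardinality |L̃|. -/

import Mathlib

open MvPolynomial

variable {K : Type*} [Field K]

/-- The region `L_i = {(x,y) : 1 ≤ x ≤ a_i, b_i ≤ y ≤ n}` of the `m × n` grid determined by a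
distinguished point `(a_i, b_i)` (matrix coordinates are 1-based). -/
def ladderRegion (a b : ℕ → ℕ) (n : ℕ) (i : ℕ) : Set (ℕ × ℕ) :=
  {p | 1 ≤ p.1 ∧ p.1 ≤ a i ∧ b i ≤ p.2 ∧ p.2 ≤ n}

/-- The mixed ladder determinantal ideal `I_t(L) = I_{t_1}(L_1) + ⋯ + I_{t_s}(L_s)`. -/
noncomputable def mixedLadderIdeal (K : Type*) [Field K] (V : Set (ℕ × ℕ))
    (a b t : ℕ → ℕ) (n s : ℕ) : Ideal (MvPolynomial V K) :=
  ⨆ i ∈ Set.Icc 1 s, Ideal.span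
    {p | ∃ r c : Fin (t i) → ℕ, StrictMono r ∧ StrictMono c ∧
      ∃ h : ∀ x y : Fin (t i), (r x, c y) ∈ ladderRegion a b n i ∧ (r x, c y) ∈ V,
      p = Matrix.det (Matrix.of fun x y => (MvPolynomial.X ⟨(r x, c y), (h x y).2⟩ :
        MvPolynomial V K))}

/-- The height of an ideal. -/
noncomputable def idealHeight {R : Type*} [CommRing R] (I : Ideal R) : ℕ∞ :=
  ⨅ (p : PrimeSpectrum R) (_ : I ≤ p.asIdeal), Order.height p

/-!
A prime containing `I_t(L)` is the kernel of the evaluation of the variables at the entries of a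
matrix over its residue field, whose minors of size `t i` on the `i`-th block vanish. In that block
all but at most `t i - 1` rows are linear combinations of the rows above them, and all but at most
`t i - 1` columns of the columns to their right. An entry in such a row and such a column is a
rational function of the other entries weakly above and to the right of it. There are at least
`|L̃|` such entries, and evaluating the variables one at a time gives a chain of primes which grows
strictly at each of them, so the height of the prime is at least `|L̃|`.

Conversely, a set of pivot positions defines a generic sum of rank one matrices, one for each pivot
and supported weakly below and to the left of it. If fewer than `t i` pivots lie in the `i`-th
block, its minors of size `t i` vanish there. The entries in the hooks of the pivots form a
triangular system, hence are algebraically independent, so the kernel of the evaluation at this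
matrix is a prime containing `I_t(L)` whose height is at most the number of positions outside the
hooks. Choosing the pivots recursively brings this number down to `|L̃|`.
-/

section HeightLowerBound

variable {F σ : Type*} [Field F] [Algebra K F]

open scoped Classical in
/-- Evaluation at `φ` of the variables in `T` only, the other variables being kept. The kernels
for increasing `T` form a chain of primes ending at the kernel of `aeval φ`. -/
noncomputable def partialEval (K : Type*) [Field K] [Algebra K F] (φ : σ → F) (T : Set σ) :
    MvPolynomial σ K →ₐ[K] MvPolynomial σ F :=
  aeval fun e => if e ∈ T then C (φ e) else X e

lemma partialEval_X_of_mem (φ : σ → F) {T : Set σ} {e : σ} (he : e ∈ T) :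
    partialEval K φ T (X e) = C (φ e) := by
  simp [partialEval, he]

lemma partialEval_X_of_notMem (φ : σ → F) {T : Set σ} {e : σ} (he : e ∉ T) :
    partialEval K φ T (X e) = X e := by
  simp [partialEval, he]

lemma partialEval_of_mem_supported (φ : σ → F) {S T : Set σ} (hST : S ⊆ T) {p : MvPolynomial σ K}
    (hp : p ∈ supported K S) : partialEval K φ T p = C (aeval φ p) := by
  let ψ : MvPolynomial σ K →ₐ[K] MvPolynomial σ F :=
    ((Algebra.ofId F (MvPolynomial σ F)).restrictScalars K).comp (aeval φ)
  have hle : supported K S ≤ AlgHom.equalizer (partialEval K φ T) ψ := by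
    refine Algebra.adjoin_le ?_
    rintro _ ⟨e, he, rfl⟩
    simp [ψ, partialEval_X_of_mem φ (hST he), Algebra.ofId_apply]
  exact hle hp

lemma ker_partialEval_univ (φ : σ → F) :
    RingHom.ker (partialEval K φ Set.univ) = RingHom.ker (aeval φ : MvPolynomial σ K →ₐ[K] F) := by
  ext p
  rw [RingHom.mem_ker, RingHom.mem_ker, partialEval_of_mem_supported φ subset_rfl (by simp)]
  exact map_eq_zero_iff C (C_injective σ F)

lemma ker_partialEval_mono (φ : σ → F) {S T : Set σ} (h : S ⊆ T) :
    RingHom.ker (partialEval K φ S) ≤ RingHom.ker (partialEval K φ T) := by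
  have hcomp : partialEval K φ T =
      ((partialEval F φ T).restrictScalars K).comp (partialEval K φ S) := by
    refine MvPolynomial.algHom_ext fun e => ?_
    by_cases he : e ∈ S
    · simp [partialEval, he, h he]
    · simp [partialEval, he]
  intro p hp
  rw [RingHom.mem_ker] at hp ⊢
  rw [hcomp, AlgHom.comp_apply, hp, map_zero]

lemma exists_mul_aeval_eq_aeval_of_mem_adjoin (φ : σ → F) {S : Set σ} {x : F}
    (hx : x ∈ IntermediateField.adjoin K (φ '' S)) :
    ∃ f ∈ supported K S, ∃ g ∈ supported K S, aeval φ g ≠ 0 ∧ x * aeval φ g = aeval φ f := by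
  have himage : Algebra.adjoin K (φ '' S) = (supported K S).map (aeval φ) := by
    rw [supported, AlgHom.map_adjoin, Set.image_image]
    simp
  obtain ⟨r, hr, t, ht, rfl⟩ := IntermediateField.mem_adjoin_iff_div.1 hx
  rw [himage] at hr ht
  obtain ⟨f, hf, rfl⟩ := hr
  obtain ⟨g, hg, rfl⟩ := ht
  by_cases hg0 : aeval φ g = 0
  · exact ⟨0, zero_mem _, 1, one_mem _, by simp, by simp [hg0]⟩
  · exact ⟨f, hf, g, hg, hg0, div_mul_cancel₀ _ hg0⟩

lemma ker_partialEval_lt_insert (φ : σ → F) {S : Set σ} {d : σ} (hd : d ∉ S)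
    (hφd : φ d ∈ IntermediateField.adjoin K (φ '' S)) :
    RingHom.ker (partialEval K φ S) < RingHom.ker (partialEval K φ (insert d S)) := by
  classical
  obtain ⟨f, hf, g, hg, hg0, hfg⟩ := exists_mul_aeval_eq_aeval_of_mem_adjoin φ hφd
  have hsub := Set.subset_insert d S
  refine lt_of_le_not_ge (ker_partialEval_mono φ hsub) fun hle => ?_
  have hmem : X d * g - f ∈ RingHom.ker (partialEval K φ (insert d S)) := by
    rw [RingHom.mem_ker, map_sub, map_mul, partialEval_X_of_mem φ (Set.mem_insert d S),
      partialEval_of_mem_supported φ hsub hg, partialEval_of_mem_supported φ hsub hf, ← hfg,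
      map_mul, sub_self]
  have hzero := hle hmem
  rw [RingHom.mem_ker, map_sub, map_mul, partialEval_X_of_notMem φ hd,
    partialEval_of_mem_supported φ subset_rfl hg, partialEval_of_mem_supported φ subset_rfl hf,
    mul_comm] at hzero
  have hcoeff := congrArg (coeff (Finsupp.single d 1)) hzero
  have hne : (0 : σ →₀ ℕ) ≠ Finsupp.single d 1 := (by simp : Finsupp.single d 1 ≠ 0).symm
  rw [coeff_sub, coeff_C_mul, coeff_C, if_neg hne] at hcoeff
  exact hg0 (by simpa using hcoeff)

lemma card_inter_le_height_ker_partialEval [DecidableEq σ] {ι : Type*} [LinearOrder ι]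
    (φ : σ → F) (ρ : σ → ι) (D T : Finset σ)
    (hD : ∀ d ∈ D ∩ T, φ d ∈ IntermediateField.adjoin K (φ '' {e | e ∈ T ∧ ρ e < ρ d})) :
    ((D ∩ T).card : ℕ∞) ≤ (RingHom.ker (partialEval K φ T)).height := by
  induction T using Finset.induction_on_max_value ρ with
  | empty => simp
  | insert d S hdS hmax ih =>
    have hlower : ∀ c, ρ c ≤ ρ d → {e | e ∈ insert d S ∧ ρ e < ρ c} ⊆ S := by
      intro c hc e he
      grind
    have ih := ih fun c hc =>
      have hsub : {e | e ∈ insert d S ∧ ρ e < ρ c} ⊆ {e | e ∈ S ∧ ρ e < ρ c} := fun e he =>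
        ⟨hlower c (hmax c (Finset.mem_inter.1 hc).2) he, he.2⟩
      IntermediateField.adjoin.mono K _ _ (Set.image_mono hsub)
        (hD c (Finset.inter_subset_inter_left (Finset.subset_insert d S) hc))
    rw [Finset.coe_insert]
    by_cases hdD : d ∈ D
    · have hlt : RingHom.ker (partialEval K φ S) <
          RingHom.ker (partialEval K φ (insert d (S : Set σ))) :=
        ker_partialEval_lt_insert φ hdS <| IntermediateField.adjoin.mono K _ _
          (Set.image_mono (hlower d le_rfl)) (hD d (by simp [hdD]))
      have := RingHom.ker_isPrime (partialEval K φ S)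
      have := RingHom.ker_isPrime (partialEval K φ (insert d (S : Set σ)))
      rw [Finset.inter_insert_of_mem hdD, Finset.card_insert_of_notMem (by simp [hdS]),
        Nat.cast_add_one]
      exact (add_le_add_left ih 1).trans (Ideal.height_add_one_le_of_lt_of_isPrime hlt)
    · rw [Finset.inter_insert_of_notMem hdD]
      exact ih.trans (Ideal.height_mono (ker_partialEval_mono φ (Set.subset_insert d _)))

theorem card_le_height_ker_aeval [Finite σ] {ι : Type*} [LinearOrder ι]
    (φ : σ → F) (ρ : σ → ι) (D : Finset σ)
    (hD : ∀ d ∈ D, φ d ∈ IntermediateField.adjoin K (φ '' {e | ρ e < ρ d})) :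
    (D.card : ℕ∞) ≤ (RingHom.ker (aeval φ : MvPolynomial σ K →ₐ[K] F)).height := by
  classical
  have := Fintype.ofFinite σ
  have hcard := card_inter_le_height_ker_partialEval (K := K) φ ρ D Finset.univ (by simpa using hD)
  rwa [Finset.inter_univ, Finset.coe_univ, ker_partialEval_univ] at hcard

end HeightLowerBound

section HeightUpperBound

open nonZeroDivisors in
lemma height_le_card_of_comap_C_eq_bot {R τ : Type*} [CommRing R] [IsDomain R] [Fintype τ]
    (P : Ideal (MvPolynomial τ R)) [P.IsPrime] (hP : P.comap C = ⊥) :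
    P.height ≤ Fintype.card τ := by
  let _ : Algebra (MvPolynomial τ R) (MvPolynomial τ (FractionRing R)) := algebraMvPolynomial
  let S := Submonoid.map (C : R →+* MvPolynomial τ R) R⁰
  let Q := P.map (algebraMap (MvPolynomial τ R) (MvPolynomial τ (FractionRing R)))
  have hdisj : Disjoint (S : Set (MvPolynomial τ R)) P := by
    refine Set.disjoint_left.2 ?_
    rintro _ ⟨r, hr, rfl⟩ hrP
    have hr0 : r ∈ P.comap C := hrP
    rw [hP] at hr0
    exact nonZeroDivisors.ne_zero hr hr0
  have : Q.IsPrime := IsLocalization.isPrime_of_isPrime_disjoint S _ P inferInstance hdisj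
  have hdim : (Q.height : WithBot ℕ∞) ≤ Fintype.card τ := by
    have := Ideal.height_le_ringKrullDim_of_isPrime (I := Q)
    rwa [MvPolynomial.ringKrullDim_of_isNoetherianRing, ringKrullDim_eq_zero_of_field, zero_add,
      Nat.card_eq_fintype_card] at this
  rw [← IsLocalization.height_map_of_disjoint (S := MvPolynomial τ (FractionRing R)) S P hdisj]
  exact_mod_cast hdim

theorem height_ker_le_card {A σ : Type*} [CommRing A] [IsDomain A] [Algebra K A]
    (f : MvPolynomial σ K →ₐ[K] A) (T : Finset σ)
    (hf : AlgebraicIndependent K fun e : {e // e ∉ T} => f (X e)) :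
    (RingHom.ker f).height ≤ T.card := by
  classical
  let ε : MvPolynomial {e // e ∈ T} (MvPolynomial {e // e ∉ T} K) ≃ₐ[K] MvPolynomial σ K :=
    (sumAlgEquiv K _ _).symm.trans (renameEquiv K (Equiv.sumCompl (· ∈ T)))
  have hε : (f.comp ε.toAlgHom).comp (IsScalarTower.toAlgHom K _ _) =
      aeval fun e : {e // e ∉ T} => f (X e) :=
    MvPolynomial.algHom_ext fun e => by simp [ε, algebraMap_eq]
  have hbot : ((RingHom.ker f).comap ε.toRingEquiv).comap C = ⊥ := by
    refine (Submodule.eq_bot_iff _).2 fun p hp => (injective_iff_map_eq_zero _).1 hf p ?_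
    rw [← hε]
    exact hp
  have : (RingHom.ker f).IsPrime := RingHom.ker_isPrime f
  have : ((RingHom.ker f).comap ε.toRingEquiv).IsPrime := Ideal.comap_isPrime _ _
  rw [← RingEquiv.height_comap ε.toRingEquiv, ← Fintype.card_coe]
  exact height_le_card_of_comap_C_eq_bot _ hbot

end HeightUpperBound

section Minors

variable {A F ι κ : Type*} [CommRing A] [Field F]

/-- All minors of size `t` of the matrix `M` with rows in `S` and columns in `V` vanish. -/
def MinorsVanish [Preorder ι] [Preorder κ] (M : ι → κ → A) (S : Finset ι) (V : Finset κ)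
    (t : ℕ) : Prop :=
  ∀ (r : Fin t → ι) (c : Fin t → κ), StrictMono r → StrictMono c → (∀ x, r x ∈ S) →
    (∀ y, c y ∈ V) → (Matrix.of fun x y => M (r x) (c y)).det = 0

lemma MinorsVanish.transpose [Preorder ι] [Preorder κ] {M : ι → κ → A} {S : Finset ι}
    {V : Finset κ} {t : ℕ} (h : MinorsVanish M S V t) :
    MinorsVanish (fun y x => M x y) V S t := by
  intro r c hr hc hrV hcS
  rw [← Matrix.det_transpose]
  exact h c r hc hr hcS hrV

lemma minorsVanish_of_eq_sum_mul [IsDomain A] [Preorder ι] [Preorder κ] {γ : Type*}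
    {M : ι → κ → A} {S : Finset ι} {V : Finset κ} {t : ℕ} {W : Finset γ}
    (hW : W.card < t) (f : ι → γ → A) (g : γ → κ → A)
    (hM : ∀ x ∈ S, ∀ y ∈ V, M x y = ∑ w ∈ W, f x w * g w y) : MinorsVanish M S V t := by
  intro r c _ _ hrS hcV
  let B : Matrix (Fin t) W A := Matrix.of fun x w => f (r x) w
  let C : Matrix W (Fin t) A := Matrix.of fun w y => g w (c y)
  have hBC : (Matrix.of fun x y => M (r x) (c y)) = B * C := by
    ext x y
    simp only [Matrix.mul_apply, Matrix.of_apply, B, C, hM _ (hrS x) _ (hcV y)]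
    exact (Finset.sum_coe_sort W fun w => f (r x) w * g w (c y)).symm
  by_contra hdet
  have hle : (B * C).rank ≤ W.card :=
    (Matrix.rank_mul_le_left B C).trans (B.rank_le_card_width.trans_eq (Fintype.card_coe W))
  have hrank : (B * C).rank = t := by
    rw [← hBC, Matrix.rank_of_det_ne_zero hdet, Fintype.card_fin]
  omega

lemma exists_card_eq_linearIndepOn_col [Fintype ι] {M : ι → κ → F} {V : Finset κ}
    (h : LinearIndependent F fun i (y : V) => M i y) :
    ∃ B ⊆ V, B.card = Fintype.card ι ∧ LinearIndepOn F (fun y i => M i y) (B : Set κ) := by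
  classical
  let N : Matrix ι V F := Matrix.of fun i y => M i y
  obtain ⟨B, hBV, -, hspan, hB⟩ := exists_linearIndepOn_extension
    (linearIndepOn_empty F fun y i => M i y) (Set.empty_subset (V : Set κ))
  lift B to Finset κ using V.finite_toSet.subset hBV
  refine ⟨B, by simpa using hBV, ?_, hB⟩
  have hcol : Set.range N.col = (fun y i => M i y) '' (V : Set κ) := by
    rw [Set.image_eq_range]
    rfl
  have hspan' := Submodule.span_eq_of_le _ hspan (Submodule.span_mono (Set.image_mono hBV))
  have hrank : N.rank = Fintype.card ι := LinearIndependent.rank_matrix h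
  have hfinrank := finrank_span_eq_card hB
  rw [N.rank_eq_finrank_span_cols, hcol, hspan', Set.image_eq_range] at hrank
  rw [← hrank]
  simpa using hfinrank.symm

lemma card_lt_of_linearIndepOn_row [LinearOrder ι] [LinearOrder κ] {M : ι → κ → F}
    {S T : Finset ι} {V : Finset κ} {t : ℕ} (hM : MinorsVanish M S V t) (hTS : T ⊆ S)
    (hT : LinearIndepOn F (fun x (y : V) => M x y) (T : Set ι)) : T.card < t := by
  by_contra! ht
  obtain ⟨T', hT', hcard⟩ := Finset.exists_subset_card_eq ht
  let r := T'.orderEmbOfFin hcard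
  have hr : ∀ x, r x ∈ T := fun x => hT' (T'.orderEmbOfFin_mem hcard x)
  have hrow : LinearIndependent F fun x (y : V) => M (r x) y :=
    hT.comp (fun x => ⟨r x, hr x⟩) fun x y h => r.injective (by simpa using h)
  obtain ⟨B, hBV, hBcard, hB⟩ := exists_card_eq_linearIndepOn_col hrow
  rw [Fintype.card_fin] at hBcard
  let c := B.orderEmbOfFin hBcard
  have hcol : LinearIndependent F (Matrix.of fun x y => M (r x) (c y)).col :=
    hB.comp (fun y => ⟨c y, B.orderEmbOfFin_mem hBcard y⟩)
      fun x y h => c.injective (Subtype.ext_iff.1 h)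
  rw [Matrix.linearIndependent_cols_iff_isUnit, Matrix.isUnit_iff_isUnit_det] at hcol
  exact hcol.ne_zero (hM r c r.strictMono c.strictMono (fun x => hTS (hr x))
    fun y => hBV (B.orderEmbOfFin_mem hBcard y))

end Minors

section DependentIndices

variable {F ι β V : Type*} [Field F] [AddCommGroup V] [Module F V] [LinearOrder β]

open scoped Classical in
/-- The indices in `S` whose vector is a linear combination of the vectors at the indices of `S`
preceding it. Precedence is measured by `g`, so that rows can be scanned upwards and columns
downwards. -/
noncomputable def dependentIndices (F : Type*) [Field F] [Module F V] (g : ι → β) (v : ι → V)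
    (S : Finset ι) : Finset ι :=
  {x ∈ S | v x ∈ Submodule.span F (v '' {u ∈ S | g u < g x})}

lemma dependentIndices_subset (g : ι → β) (v : ι → V) (S : Finset ι) :
    dependentIndices F g v S ⊆ S := by
  classical exact Finset.filter_subset _ S

lemma linearIndepOn_of_notMem_span {g : ι → β} (hg : g.Injective) {v : ι → V} {S : Finset ι}
    (hS : ∀ x ∈ S, v x ∉ Submodule.span F (v '' {u ∈ S | g u < g x})) :
    LinearIndepOn F v (S : Set ι) := by
  classical
  induction S using Finset.induction_on_max_value g with
  | empty => simp
  | insert x S hxS hmax ih =>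
    rw [Finset.coe_insert, linearIndepOn_insert (by simpa using hxS)]
    constructor
    · refine ih fun y hy hspan => hS y (Finset.mem_insert_of_mem hy) ?_
      exact Submodule.span_mono (Set.image_mono fun u => And.imp_left Finset.mem_insert_of_mem)
        hspan
    · have hsub : (S : Set ι) ⊆ {u | u ∈ insert x S ∧ g u < g x} := fun u hu =>
        ⟨Finset.mem_insert_of_mem hu, (hmax u hu).lt_of_ne (hg.ne (ne_of_mem_of_not_mem hu hxS))⟩
      exact fun hspan => hS x (Finset.mem_insert_self x S)
        (Submodule.span_mono (Set.image_mono hsub) hspan)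

lemma linearIndepOn_sdiff_dependentIndices [DecidableEq ι] {g : ι → β} (hg : g.Injective)
    (v : ι → V) (S : Finset ι) :
    LinearIndepOn F v (S \ dependentIndices F g v S : Finset ι) := by
  refine linearIndepOn_of_notMem_span hg fun x hx hspan => ?_
  simp only [dependentIndices, Finset.mem_sdiff, Finset.mem_filter, not_and] at hx
  refine hx.2 hx.1 (Submodule.span_mono (Set.image_mono fun u hu => ?_) hspan)
  exact ⟨(Finset.mem_sdiff.1 hu.1).1, hu.2⟩

lemma card_lt_card_dependentIndices_add {κ : Type*} [LinearOrder ι] [LinearOrder κ] {g : ι → β}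
    (hg : g.Injective) {M : ι → κ → F} {S : Finset ι} {T : Finset κ} {t : ℕ}
    (hM : MinorsVanish M S T t) :
    S.card < (dependentIndices F g (fun x (y : T) => M x y) S).card + t := by
  have hlt := card_lt_of_linearIndepOn_row hM Finset.sdiff_subset
    (linearIndepOn_sdiff_dependentIndices hg _ S)
  have := Finset.le_card_sdiff (dependentIndices F g (fun x (y : T) => M x y) S) S
  omega

lemma exists_eq_sum_of_mem_dependentIndices {κ : Type*} {g : ι → β} {M : ι → κ → F}
    {S U : Finset ι} {T : Finset κ} {x : ι}
    (hx : x ∈ dependentIndices F g (fun x (y : T) => M x y) S)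
    (hU : ∀ u ∈ S, g u < g x → u ∈ U) :
    ∃ l : ι → F, ∀ y ∈ T, M x y = ∑ u ∈ U, l u * M u y := by
  classical
  have hspan : (fun y : T => M x y) ∈ Submodule.span F ((fun u (y : T) => M u y) '' (U : Set ι)) :=
    Submodule.span_mono (Set.image_mono fun u hu => hU u hu.1 hu.2) (Finset.mem_filter.1 hx).2
  obtain ⟨l, hl⟩ := (Submodule.mem_span_image_finset_iff_exists_fun' F).1 hspan
  refine ⟨l, fun y hy => ?_⟩
  simpa using (congrFun hl ⟨y, hy⟩).symm

end DependentIndices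

section DeterminedEntries

variable {F ι κ : Type*} [Field F] [Algebra K F]

lemma exists_mem_sum_mul_eq (E : IntermediateField K F) {A : ι → κ → F} {c : κ → F}
    {U : Finset ι} {V : Finset κ} (hA : ∀ u ∈ U, ∀ v ∈ V, A u v ∈ E) (hc : ∀ v ∈ V, c v ∈ E)
    (hsol : ∃ l : ι → F, ∀ v ∈ V, c v = ∑ u ∈ U, l u * A u v) :
    ∃ l : ι → F, (∀ u, l u ∈ E) ∧ ∀ v ∈ V, c v = ∑ u ∈ U, l u * A u v := by
  obtain ⟨l, hl⟩ := hsol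
  obtain ⟨π, hπ⟩ := LinearMap.exists_leftInverse_of_injective
    (Algebra.linearMap E F) (LinearMap.ker_eq_bot.2 (algebraMap E F).injective)
  have hπE : ∀ e : E, π (e : F) = e := LinearMap.congr_fun hπ
  refine ⟨fun u => π (l u), fun u => (π (l u)).2, fun v hv => ?_⟩
  have hπmul : ∀ u ∈ U, (π (l u * A u v) : F) = π (l u) * A u v := fun u hu => by
    have hsmul : l u * A u v = (⟨A u v, hA u hu v hv⟩ : E) • l u := mul_comm _ _
    rw [hsmul, map_smul, smul_eq_mul, MulMemClass.coe_mul, mul_comm]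
  calc c v = π (c v) := (congrArg Subtype.val (hπE ⟨c v, hc v hv⟩)).symm
    _ = ∑ u ∈ U, (π (l u * A u v) : F) := by rw [hl v hv, map_sum, AddSubmonoidClass.coe_finsetSum]
    _ = ∑ u ∈ U, π (l u) * A u v := Finset.sum_congr rfl hπmul

/-- Two solutions of the row equation differ by a vector orthogonal to the columns in `V`, hence
to the column `y`, so the value at `y` can be computed from a solution over `E`. -/
lemma entry_mem_of_dependent (E : IntermediateField K F) {M : ι → κ → F} {U : Finset ι}
    {V : Finset κ} {x : ι} {y : κ} (hUV : ∀ u ∈ U, ∀ v ∈ V, M u v ∈ E)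
    (hxV : ∀ v ∈ V, M x v ∈ E) (hUy : ∀ u ∈ U, M u y ∈ E)
    (hrow : ∃ l : ι → F, M x y = ∑ u ∈ U, l u * M u y ∧ ∀ v ∈ V, M x v = ∑ u ∈ U, l u * M u v)
    (hcol : ∃ k : κ → F, ∀ u ∈ U, M u y = ∑ v ∈ V, k v * M u v) : M x y ∈ E := by
  obtain ⟨l, hly, hlV⟩ := hrow
  obtain ⟨k, hk⟩ := hcol
  obtain ⟨l', hl'E, hl'V⟩ := exists_mem_sum_mul_eq E hUV hxV ⟨l, hlV⟩
  have hval : ∀ j : ι → F, (∀ v ∈ V, M x v = ∑ u ∈ U, j u * M u v) →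
      ∑ u ∈ U, j u * M u y = ∑ v ∈ V, k v * M x v := fun j hj =>
    calc ∑ u ∈ U, j u * M u y = ∑ u ∈ U, ∑ v ∈ V, k v * (j u * M u v) :=
          Finset.sum_congr rfl fun u hu => by
            rw [hk u hu, Finset.mul_sum]
            exact Finset.sum_congr rfl fun v _ => by ring
      _ = ∑ v ∈ V, k v * M x v := by
          rw [Finset.sum_comm]
          exact Finset.sum_congr rfl fun v hv => by rw [hj v hv, Finset.mul_sum]
  rw [hly, hval l hlV, ← hval l' hl'V]
  exact sum_mem fun u hu => mul_mem (hl'E u) (hUy u hu)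

end DeterminedEntries

section NestedProducts

variable {ι α β : Type*} [DecidableEq α] [DecidableEq β]

/-- The fibre of the left union over `y` is the largest `R i` with `y ∈ C i`. -/
lemma card_biUnion_product_le_left {I : Finset ι} {R R' : ι → Finset α} {C : ι → Finset β}
    (hR : ∀ i ∈ I, ∀ j ∈ I, R i ⊆ R j ∨ R j ⊆ R i) (hcard : ∀ i ∈ I, (R i).card ≤ (R' i).card) :
    (I.biUnion fun i => R i ×ˢ C i).card ≤ (I.biUnion fun i => R' i ×ˢ C i).card := by
  have hfib : ∀ Q : ι → Finset α, (I.biUnion fun i => Q i ×ˢ C i).card =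
      ∑ y ∈ I.biUnion C, ({i ∈ I | y ∈ C i}.biUnion Q).card := by
    intro Q
    rw [Finset.card_eq_sum_card_fiberwise (f := Prod.snd) (t := I.biUnion C)]
    · refine Finset.sum_congr rfl fun y _ => ?_
      rw [← Finset.card_image_of_injective ({i ∈ I | y ∈ C i}.biUnion Q)
        (Prod.mk_left_injective y)]
      refine congrArg Finset.card ?_
      ext ⟨x, y'⟩
      simp only [Finset.mem_filter, Finset.mem_biUnion, Finset.mem_product, Finset.mem_image]
      grind
    · intro e he
      simp only [Finset.coe_biUnion, Set.mem_iUnion, Finset.mem_coe, Finset.mem_product] at he ⊢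
      grind
  rw [hfib, hfib]
  refine Finset.sum_le_sum fun y hy => ?_
  have hne : {i ∈ I | y ∈ C i}.Nonempty := by
    obtain ⟨i, hi, hyi⟩ := Finset.mem_biUnion.1 hy
    exact ⟨i, Finset.mem_filter.2 ⟨hi, hyi⟩⟩
  obtain ⟨k, hk, hmax⟩ := Finset.exists_max_image _ (fun i => (R i).card) hne
  have hsub : {i ∈ I | y ∈ C i}.biUnion R ⊆ R k := by
    refine Finset.biUnion_subset.2 fun i hi => ?_
    refine (hR i (Finset.mem_filter.1 hi).1 k (Finset.mem_filter.1 hk).1).elim id fun hki => ?_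
    exact (Finset.eq_of_subset_of_card_le hki (hmax i hi)).ge
  calc _ ≤ (R k).card := Finset.card_le_card hsub
    _ ≤ (R' k).card := hcard k (Finset.mem_filter.1 hk).1
    _ ≤ _ := Finset.card_le_card (Finset.subset_biUnion_of_mem R' hk)

lemma card_biUnion_product_comm (I : Finset ι) (R : ι → Finset α) (C : ι → Finset β) :
    (I.biUnion fun i => R i ×ˢ C i).card = (I.biUnion fun i => C i ×ˢ R i).card := by
  rw [← Finset.card_map (Equiv.prodComm α β).toEmbedding]
  refine congrArg Finset.card ?_
  ext ⟨y, x⟩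
  simp [and_comm]

lemma card_biUnion_product_le {I : Finset ι} {R R' : ι → Finset α} {C C' : ι → Finset β}
    (hR : ∀ i ∈ I, ∀ j ∈ I, R i ⊆ R j ∨ R j ⊆ R i) (hC : ∀ i ∈ I, ∀ j ∈ I, C i ⊆ C j ∨ C j ⊆ C i)
    (hRR' : ∀ i ∈ I, (R i).card ≤ (R' i).card) (hCC' : ∀ i ∈ I, (C i).card ≤ (C' i).card) :
    (I.biUnion fun i => R i ×ˢ C i).card ≤ (I.biUnion fun i => R' i ×ˢ C' i).card :=
  calc _ ≤ (I.biUnion fun i => R' i ×ˢ C i).card := card_biUnion_product_le_left hR hRR'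
    _ = (I.biUnion fun i => C i ×ˢ R' i).card := card_biUnion_product_comm I R' C
    _ ≤ (I.biUnion fun i => C' i ×ˢ R' i).card := card_biUnion_product_le_left hC hCC'
    _ = _ := card_biUnion_product_comm I C' R'

end NestedProducts

section TriangularSystems

variable {R σ : Type*} [CommRing R]

lemma exists_polynomial_aeval_X_eq (e : σ) (p : MvPolynomial σ R) :
    ∃ q : Polynomial (supported R {e}ᶜ), Polynomial.aeval (X e) q = p := by
  induction p using MvPolynomial.induction_on with
  | C r => exact ⟨Polynomial.C (algebraMap R _ r), Polynomial.aeval_C _ _⟩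
  | add p q hp hq =>
    obtain ⟨p, rfl⟩ := hp
    obtain ⟨q, rfl⟩ := hq
    exact ⟨p + q, map_add _ p q⟩
  | mul_X p i hp =>
    obtain ⟨p, rfl⟩ := hp
    by_cases hi : i = e
    · exact ⟨p * Polynomial.X, by simp [hi]⟩
    · exact ⟨p * Polynomial.C ⟨X i, Algebra.subset_adjoin ⟨i, hi, rfl⟩⟩, by simp⟩

lemma transcendental_supported_compl_of_mem_vars [IsDomain R] {e : σ} {p : MvPolynomial σ R}
    (he : e ∈ p.vars) : Transcendental (supported R {e}ᶜ) p := by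
  obtain ⟨q, rfl⟩ := exists_polynomial_aeval_X_eq e p
  have hq : q.natDegree ≠ 0 := by
    intro hdeg
    rw [Polynomial.eq_C_of_natDegree_eq_zero hdeg, Polynomial.aeval_C] at he
    exact mem_supported.1 (q.coeff 0).2 he rfl
  refine (transcendental_supported_X R (by simp)).aeval q hq (mem_nonZeroDivisors_of_ne_zero ?_)
  exact Polynomial.leadingCoeff_ne_zero.2 fun h => hq (by simp [h])

theorem algebraicIndepOn_of_triangular [IsDomain R] {ι : Type*} [LinearOrder ι] (ρ : σ → ι)
    (f : σ → MvPolynomial σ R) (S : Finset σ)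
    (hlower : ∀ e ∈ S, ∀ d ∈ (f e).vars, d = e ∨ ρ d < ρ e) (hself : ∀ e ∈ S, e ∈ (f e).vars) :
    AlgebraicIndepOn R f (S : Set σ) := by
  classical
  induction S using Finset.induction_on_max_value ρ with
  | empty =>
    have : IsEmpty ((∅ : Finset σ) : Set σ) := by simp
    exact algebraicIndependent_empty_type_iff.2 (C_injective σ R)
  | insert e S heS hmax ih =>
    rw [Finset.coe_insert]
    refine (ih (fun d hd => hlower d (Finset.mem_insert_of_mem hd))
      fun d hd => hself d (Finset.mem_insert_of_mem hd)).insert ?_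
    have hle : Algebra.adjoin R (f '' S) ≤ supported R {e}ᶜ := by
      refine Algebra.adjoin_le ?_
      rintro _ ⟨d, hd, rfl⟩
      refine mem_supported.2 fun c hc => ?_
      rintro rfl
      rcases hlower d (Finset.mem_insert_of_mem hd) c hc with rfl | hlt
      · exact heS hd
      · exact hlt.not_ge (hmax d hd)
    refine Transcendental.of_tower_top_of_subalgebra_le hle ?_
    exact transcendental_supported_compl_of_mem_vars (hself e (Finset.mem_insert_self e S))

end TriangularSystems

section PivotMatrix

variable {R α β : Type*} [CommRing R] [LinearOrder α] [LinearOrder β]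

/-- Matrix positions ordered from the top right corner: by rows from top to bottom, and inside a
row from right to left. -/
def positionRank (e : α × β) : α ×ₗ βᵒᵈ := toLex (e.1, OrderDual.toDual e.2)

lemma positionRank_lt_iff {d e : α × β} :
    positionRank d < positionRank e ↔ d.1 < e.1 ∨ d.1 = e.1 ∧ e.2 < d.2 :=
  Prod.Lex.toLex_lt_toLex

/-- The position `e` lies in the hook with corner `w`: weakly to the left of `w` in its row, or
weakly below `w` in its column. -/
abbrev InHook (w e : α × β) : Prop :=
  w.1 = e.1 ∧ e.2 ≤ w.2 ∨ w.2 = e.2 ∧ w.1 ≤ e.1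

/-- The generic matrix with pivots at the positions in `W`: the sum over `w ∈ W` of the rank one
matrices `X (x, w.2) * X (w.1, y)` supported in the rows `x` weakly below and the columns `y`
weakly to the left of `w`. -/
noncomputable def pivotMatrix (R : Type*) [CommRing R] (W : Finset (α × β)) (x : α) (y : β) :
    MvPolynomial (α × β) R :=
  ∑ w ∈ W with w.1 ≤ x ∧ y ≤ w.2, X (x, w.2) * X (w.1, y)

lemma minorsVanish_pivotMatrix [IsDomain R] {W : Finset (α × β)} {S : Finset α} {V : Finset β}
    {t : ℕ} {a : α} {b : β} (hS : ∀ x ∈ S, x ≤ a) (hV : ∀ y ∈ V, b ≤ y)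
    (hW : {w ∈ W | w.1 ≤ a ∧ b ≤ w.2}.card < t) : MinorsVanish (pivotMatrix R W) S V t := by
  refine minorsVanish_of_eq_sum_mul hW (fun x w => if w.1 ≤ x then X (x, w.2) else 0)
    (fun w y => if y ≤ w.2 then X (w.1, y) else 0) fun x hx y hy => ?_
  rw [pivotMatrix, Finset.sum_filter, Finset.sum_filter]
  refine Finset.sum_congr rfl fun w _ => ?_
  have := hS x hx
  have := hV y hy
  grind

/-- The second sum does not involve `X e`, so the entry at `e` is linear in `X e`, with nonzero
leading coefficient as soon as some hook contains `e`. -/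
lemma pivotMatrix_eq_mul_X_add (W : Finset (α × β)) (e : α × β) :
    pivotMatrix R W e.1 e.2 = (∑ w ∈ W with InHook w e, X w) * X e +
      ∑ w ∈ W with w.1 < e.1 ∧ e.2 < w.2, X (e.1, w.2) * X (w.1, e.2) := by
  simp only [pivotMatrix, Finset.sum_mul, Finset.sum_filter, ← Finset.sum_add_distrib]
  refine Finset.sum_congr rfl fun ⟨u, v⟩ _ => ?_
  obtain ⟨x, y⟩ := e
  grind

lemma eq_or_positionRank_lt_of_mem_vars_pivotMatrix [Nontrivial R] {W : Finset (α × β)}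
    {d e : α × β}
    (hd : d ∈ (pivotMatrix R W e.1 e.2).vars) : d = e ∨ positionRank d < positionRank e := by
  classical
  obtain ⟨w, hw, hdw⟩ := Finset.mem_biUnion.1 (vars_sum_subset _ _ hd)
  have hdw := vars_mul _ _ hdw
  rw [vars_X, vars_X, Finset.mem_union, Finset.mem_singleton, Finset.mem_singleton] at hdw
  rw [positionRank_lt_iff]
  grind

lemma mem_vars_pivotMatrix [IsDomain R] {W : Finset (α × β)} {w e : α × β} (hw : w ∈ W)
    (hwe : InHook w e) : e ∈ (pivotMatrix R W e.1 e.2).vars := by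
  classical
  by_contra he
  have hrest : (∑ w ∈ W with w.1 < e.1 ∧ e.2 < w.2, X (e.1, w.2) * X (w.1, e.2) :
      MvPolynomial (α × β) R) ∈ supported R {e}ᶜ := by
    refine sum_mem fun w hw => ?_
    refine mul_mem (X_mem_supported.2 ?_) (X_mem_supported.2 ?_) <;> grind
  have hne : (∑ w ∈ W with InHook w e, X w : MvPolynomial (α × β) R) ≠ 0 := fun hzero => by
    have heval := congrArg (eval (Pi.single w 1)) hzero
    rw [map_sum] at heval
    simp [hw, hwe] at heval
  have hmem : (∑ w ∈ W with InHook w e, X w) * X e ∈ supported R {e}ᶜ := by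
    rw [← add_sub_cancel_right ((∑ w ∈ W with InHook w e, X w) * X e), ← pivotMatrix_eq_mul_X_add]
    exact sub_mem (mem_supported.2 fun d hd hde => he (hde ▸ hd)) hrest
  have hdeg : degreeOf e ((∑ w ∈ W with InHook w e, X w) * X e : MvPolynomial (α × β) R) = 0 :=
    not_not.1 fun h => mem_supported.1 hmem (mem_vars_iff_degreeOf_ne_zero.2 h) rfl
  rw [degreeOf_mul_eq hne (X_ne_zero e), degreeOf_X_self] at hdeg
  omega

theorem height_ker_aeval_pivotMatrix_le (W V : Finset (α × β)) :
    (RingHom.ker (aeval (R := K) fun e : (V : Set (α × β)) =>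
      pivotMatrix K W e.1.1 e.1.2)).height ≤
      {e ∈ V | ∀ w ∈ W, ¬ InHook w e}.card := by
  classical
  let T : Finset (V : Set (α × β)) :=
    {e ∈ V | ∀ w ∈ W, ¬ InHook w e}.subtype (· ∈ (V : Set (α × β)))
  have hT : T.card = {e ∈ V | ∀ w ∈ W, ¬ InHook w e}.card := by
    rw [Finset.card_subtype, Finset.filter_true_of_mem]
    exact fun e he => Finset.mem_coe.2 (Finset.mem_filter.1 he).1
  have hind : AlgebraicIndepOn K (fun e : α × β => pivotMatrix K W e.1 e.2)
      ({e ∈ V | ∃ w ∈ W, InHook w e} : Finset (α × β)) := by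
    refine algebraicIndepOn_of_triangular positionRank _ _
      (fun e _ d hd => eq_or_positionRank_lt_of_mem_vars_pivotMatrix hd) fun e he => ?_
    obtain ⟨w, hw, hwe⟩ := (Finset.mem_filter.1 he).2
    exact mem_vars_pivotMatrix hw hwe
  have hcovered : ∀ e : {e // e ∉ T},
      e.1.1 ∈ ({e ∈ V | ∃ w ∈ W, InHook w e} : Finset (α × β)) := by
    rintro ⟨⟨e, heV⟩, heT⟩
    have heV := Finset.mem_coe.1 heV
    simpa only [T, Finset.mem_subtype, Finset.mem_filter, heV, true_and, not_forall, not_not,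
      exists_prop] using heT
  rw [← hT]
  refine height_ker_le_card _ T ?_
  simp only [aeval_X]
  exact hind.comp (fun e : {e // e ∉ T} => ⟨e.1.1, hcovered e⟩) fun d e hde =>
    Subtype.ext (Subtype.ext (congrArg Subtype.val hde :))

end PivotMatrix

section Staircases

variable {I : Finset ℕ} {p q : ℕ} {a b t : ℕ → ℕ}

/-- The one-sided ladder with lower outside corners `(a i, b i)`, `i ∈ I`, inside the quadrant of
the rows below `p` and the columns to the left of `q` (both bounds are excluded). -/
def staircase (I : Finset ℕ) (p q : ℕ) (a b : ℕ → ℕ) : Finset (ℕ × ℕ) :=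
  I.biUnion fun i => Finset.Ioc p (a i) ×ˢ Finset.Ico (b i) q

/-- The ladder `L̃` obtained by moving the `i`-th corner up and to the right by `t i - 1`. -/
def reducedStaircase (I : Finset ℕ) (p q : ℕ) (a b t : ℕ → ℕ) : Finset (ℕ × ℕ) :=
  staircase I p q (fun i => a i + 1 - t i) fun i => b i + t i - 1

lemma mem_staircase {e : ℕ × ℕ} :
    e ∈ staircase I p q a b ↔ ∃ i ∈ I, p < e.1 ∧ e.1 ≤ a i ∧ b i ≤ e.2 ∧ e.2 < q := by
  simp [staircase, and_assoc]

/-- The corners of both the ladder and the reduced ladder run down and to the right, and the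
corners of the reduced ladder lie in the quadrant (or are adjacent to it). -/
structure IsAdmissible (I : Finset ℕ) (p q : ℕ) (a b t : ℕ → ℕ) : Prop where
  row_mono : MonotoneOn a I
  col_mono : MonotoneOn b I
  reduced_row_mono : MonotoneOn (fun i => (a i : ℤ) - t i) I
  reduced_col_mono : MonotoneOn (fun i => b i + t i) I
  one_le_size : ∀ i ∈ I, 1 ≤ t i
  size_le_rows : ∀ i ∈ I, p + t i ≤ a i + 1
  size_le_cols : ∀ i ∈ I, b i + t i ≤ q + 1

lemma monotoneOn_Icc_of_le_add_one {α : Type*} [Preorder α] {f : ℕ → α} {j k : ℕ}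
    (hf : ∀ i ∈ Finset.Ico j k, f i ≤ f (i + 1)) : MonotoneOn f (Finset.Icc j k) := by
  rw [Finset.coe_Icc]
  exact monotoneOn_of_le_add_one Set.ordConnected_Icc fun i _ hi hi' =>
    hf i (Finset.mem_Ico.2 ⟨hi.1, hi'.2⟩)

lemma isAdmissible_Icc {j k : ℕ}
    (hmono : ∀ i ∈ Finset.Ico j k, a i ≤ a (i + 1) ∧ b i ≤ b (i + 1))
    (hgap : ∀ i ∈ Finset.Ico j k,
      (b i : ℤ) - b (i + 1) ≤ t (i + 1) - t i ∧ (t (i + 1) : ℤ) - t i ≤ a (i + 1) - a i)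
    (hsize : ∀ i ∈ Finset.Icc j k, 1 ≤ t i ∧ p + t i ≤ a i + 1 ∧ b i + t i ≤ q + 1) :
    IsAdmissible (Finset.Icc j k) p q a b t where
  row_mono := monotoneOn_Icc_of_le_add_one fun i hi => (hmono i hi).1
  col_mono := monotoneOn_Icc_of_le_add_one fun i hi => (hmono i hi).2
  reduced_row_mono := monotoneOn_Icc_of_le_add_one fun i hi => by
    have := hgap i hi
    omega
  reduced_col_mono := monotoneOn_Icc_of_le_add_one fun i hi => by
    have := hgap i hi
    omega
  one_le_size i hi := (hsize i hi).1
  size_le_rows i hi := (hsize i hi).2.1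
  size_le_cols i hi := (hsize i hi).2.2

lemma IsAdmissible.pred (h : IsAdmissible I p q a b t) (ht : ∀ i ∈ I, 1 < t i) :
    IsAdmissible I (p + 1) (q - 1) a b fun i => t i - 1 where
  row_mono := h.row_mono
  col_mono := h.col_mono
  reduced_row_mono i hi j hj hij := by
    have := h.reduced_row_mono hi hj hij
    have := ht i hi
    have := ht j hj
    grind
  reduced_col_mono i hi j hj hij := by
    have := h.reduced_col_mono hi hj hij
    have := ht i hi
    have := ht j hj
    grind
  one_le_size i hi := Nat.le_sub_one_of_lt (ht i hi)
  size_le_rows i hi := by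
    have := h.size_le_rows i hi
    have := ht i hi
    omega
  size_le_cols i hi := by
    have := h.size_le_cols i hi
    have := ht i hi
    omega

lemma IsAdmissible.of_subset (h : IsAdmissible I p q a b t) {J : Finset ℕ} {p' q' : ℕ}
    (hJ : J ⊆ I) (hrows : ∀ j ∈ J, p' + t j ≤ a j + 1) (hcols : ∀ j ∈ J, b j + t j ≤ q' + 1) :
    IsAdmissible J p' q' a b t where
  row_mono := h.row_mono.mono hJ
  col_mono := h.col_mono.mono hJ
  reduced_row_mono := h.reduced_row_mono.mono hJ
  reduced_col_mono := h.reduced_col_mono.mono hJ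
  one_le_size j hj := h.one_le_size j (hJ hj)
  size_le_rows := hrows
  size_le_cols := hcols

lemma IsAdmissible.before (h : IsAdmissible I p q a b t) {i : ℕ} (hi : i ∈ I) (hti : t i = 1) :
    IsAdmissible {j ∈ I | j < i} p (b i) a b t := by
  refine h.of_subset (Finset.filter_subset _ I) (fun j hj => ?_) fun j hj => ?_
  · exact h.size_le_rows j (Finset.mem_filter.1 hj).1
  · obtain ⟨hjI, hji⟩ := Finset.mem_filter.1 hj
    simpa [hti] using h.reduced_col_mono hjI hi hji.le

lemma IsAdmissible.after (h : IsAdmissible I p q a b t) {i : ℕ} (hi : i ∈ I) (hti : t i = 1) :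
    IsAdmissible {j ∈ I | i < j} (a i) q a b t := by
  refine h.of_subset (Finset.filter_subset _ I) (fun j hj => ?_) fun j hj => ?_
  · obtain ⟨hjI, hij⟩ := Finset.mem_filter.1 hj
    have := h.reduced_row_mono hi hjI hij.le
    grind
  · exact h.size_le_cols j (Finset.mem_filter.1 hj).1

/-- The positions of the staircase outside all hooks with corner in `W`. -/
def uncovered (I : Finset ℕ) (p q : ℕ) (a b : ℕ → ℕ) (W : Finset (ℕ × ℕ)) : Finset (ℕ × ℕ) :=
  {e ∈ staircase I p q a b | ∀ w ∈ W, ¬ InHook w e}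

/-- Pivot positions in the quadrant such that the pivot matrix has rank less than `t i` on the
`i`-th block of the staircase, and whose hooks leave out no more positions than there are in the
reduced staircase. -/
structure IsPivotSet (I : Finset ℕ) (p q : ℕ) (a b t : ℕ → ℕ) (W : Finset (ℕ × ℕ)) : Prop where
  lt_row : ∀ w ∈ W, p < w.1
  col_lt : ∀ w ∈ W, w.2 < q
  card_lt_size : ∀ i ∈ I, {w ∈ W | w.1 ≤ a i ∧ b i ≤ w.2}.card < t i
  card_uncovered_le : (uncovered I p q a b W).card ≤ (reducedStaircase I p q a b t).card

lemma card_reducedStaircase_pred_le (ht : ∀ i ∈ I, 1 < t i) :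
    (reducedStaircase I (p + 1) (q - 1) a b fun i => t i - 1).card ≤
      (reducedStaircase I p q a b t).card := by
  refine Finset.card_le_card_of_injOn (fun e => (e.1 - 1, e.2 + 1)) ?_ ?_
  · intro e he
    obtain ⟨i, hi, h⟩ := mem_staircase.1 he
    have := ht i hi
    exact mem_staircase.2 ⟨i, hi, by grind⟩
  · intro d hd e _ hde
    obtain ⟨i, -, h⟩ := mem_staircase.1 hd
    ext <;> grind

lemma IsPivotSet.insert_corner {W : Finset (ℕ × ℕ)} (hq : 0 < q) (ht : ∀ i ∈ I, 1 < t i)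
    (hW : IsPivotSet I (p + 1) (q - 1) a b (fun i => t i - 1) W) :
    IsPivotSet I p q a b t (insert (p + 1, q - 1) W) where
  lt_row w hw := by
    have := hW.lt_row w
    grind
  col_lt w hw := by
    have := hW.col_lt w
    grind
  card_lt_size i hi := by
    have := hW.card_lt_size i hi
    have := Finset.card_insert_le (p + 1, q - 1) {w ∈ W | w.1 ≤ a i ∧ b i ≤ w.2}
    rw [Finset.filter_insert]
    grind
  card_uncovered_le := by
    refine (Finset.card_le_card fun e he => ?_).trans
      (hW.card_uncovered_le.trans (card_reducedStaircase_pred_le ht))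
    simp only [uncovered, Finset.mem_filter, mem_staircase, Finset.forall_mem_insert] at he ⊢
    obtain ⟨⟨i, hi, h⟩, hcorner, huncov⟩ := he
    exact ⟨⟨i, hi, by grind⟩, huncov⟩

lemma uncovered_union_subset (h : IsAdmissible I p q a b t) {i : ℕ} (hi : i ∈ I)
    (W W' : Finset (ℕ × ℕ)) :
    uncovered I p q a b (W ∪ W') ⊆ Finset.Ioc p (a i) ×ˢ Finset.Ico (b i) q ∪
      (uncovered {j ∈ I | j < i} p (b i) a b W ∪ uncovered {j ∈ I | i < j} (a i) q a b W') := by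
  intro e he
  simp only [uncovered, Finset.mem_filter, mem_staircase, Finset.mem_union, Finset.mem_product,
    Finset.mem_Ioc, Finset.mem_Ico] at he ⊢
  obtain ⟨⟨j, hj, hrow, hcol⟩, huncov⟩ := he
  rcases lt_trichotomy j i with hji | rfl | hij
  · have := h.row_mono hj hi hji.le
    by_cases hbi : b i ≤ e.2
    · exact Or.inl (by omega)
    · exact Or.inr (Or.inl ⟨⟨j, ⟨hj, hji⟩, by omega⟩, fun w hw => huncov w (Or.inl hw)⟩)
  · exact Or.inl (by omega)
  · have := h.col_mono hi hj hij.le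
    by_cases hai : e.1 ≤ a i
    · exact Or.inl (by omega)
    · exact Or.inr (Or.inr ⟨⟨j, ⟨hj, hij⟩, by omega⟩, fun w hw => huncov w (Or.inr hw)⟩)

lemma card_add_card_reducedStaircase_le (h : IsAdmissible I p q a b t) {i : ℕ} (hi : i ∈ I)
    (hti : t i = 1) :
    (Finset.Ioc p (a i) ×ˢ Finset.Ico (b i) q).card +
      ((reducedStaircase {j ∈ I | j < i} p (b i) a b t).card +
        (reducedStaircase {j ∈ I | i < j} (a i) q a b t).card) ≤
      (reducedStaircase I p q a b t).card := by
  have hrows := h.size_le_rows i hi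
  have hcols := h.size_le_cols i hi
  have hdisj : Disjoint (reducedStaircase {j ∈ I | j < i} p (b i) a b t)
      (reducedStaircase {j ∈ I | i < j} (a i) q a b t) := by
    refine Finset.disjoint_left.2 fun e he he' => ?_
    obtain ⟨j, -, hje⟩ := mem_staircase.1 he
    obtain ⟨k, hk, hke⟩ := mem_staircase.1 he'
    obtain ⟨hkI, hik⟩ := Finset.mem_filter.1 hk
    have := h.col_mono hi hkI hik.le
    have := h.one_le_size k hkI
    omega
  have hdisj' : Disjoint (Finset.Ioc p (a i) ×ˢ Finset.Ico (b i) q)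
      (reducedStaircase {j ∈ I | j < i} p (b i) a b t ∪
        reducedStaircase {j ∈ I | i < j} (a i) q a b t) := by
    refine Finset.disjoint_left.2 fun e he he' => ?_
    simp only [reducedStaircase, Finset.mem_union, mem_staircase] at he'
    grind
  rw [← Finset.card_union_of_disjoint hdisj, ← Finset.card_union_of_disjoint hdisj']
  refine Finset.card_le_card (Finset.union_subset ?_ (Finset.union_subset ?_ ?_)) <;>
    intro e he <;> simp only [reducedStaircase, mem_staircase] at he ⊢ <;> grind

lemma card_filter_union_lt_size (h : IsAdmissible I p q a b t) {i : ℕ} (hi : i ∈ I)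
    (hti : t i = 1) {W W' : Finset (ℕ × ℕ)}
    (hW : IsPivotSet {j ∈ I | j < i} p (b i) a b t W)
    (hW' : IsPivotSet {j ∈ I | i < j} (a i) q a b t W') {j : ℕ} (hj : j ∈ I) :
    {w ∈ W ∪ W' | w.1 ≤ a j ∧ b j ≤ w.2}.card < t j := by
  rcases lt_trichotomy j i with hji | rfl | hij
  · have := h.row_mono hj hi hji.le
    have hfilter : {w ∈ W ∪ W' | w.1 ≤ a j ∧ b j ≤ w.2} = {w ∈ W | w.1 ≤ a j ∧ b j ≤ w.2} := by
      have := hW'.lt_row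
      grind
    exact hfilter ▸ hW.card_lt_size j (Finset.mem_filter.2 ⟨hj, hji⟩)
  · have hfilter : {w ∈ W ∪ W' | w.1 ≤ a j ∧ b j ≤ w.2} = ∅ := by
      have := hW.col_lt
      have := hW'.lt_row
      grind
    simp [hfilter, hti]
  · have := h.col_mono hi hj hij.le
    have hfilter : {w ∈ W ∪ W' | w.1 ≤ a j ∧ b j ≤ w.2} = {w ∈ W' | w.1 ≤ a j ∧ b j ≤ w.2} := by
      have := hW.col_lt
      grind
    exact hfilter ▸ hW'.card_lt_size j (Finset.mem_filter.2 ⟨hj, hij⟩)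

lemma IsPivotSet.union (h : IsAdmissible I p q a b t) {i : ℕ} (hi : i ∈ I) (hti : t i = 1)
    {W W' : Finset (ℕ × ℕ)} (hW : IsPivotSet {j ∈ I | j < i} p (b i) a b t W)
    (hW' : IsPivotSet {j ∈ I | i < j} (a i) q a b t W') :
    IsPivotSet I p q a b t (W ∪ W') where
  lt_row w hw := by
    have := h.size_le_rows i hi
    have := hW.lt_row w
    have := hW'.lt_row w
    grind
  col_lt w hw := by
    have := h.size_le_cols i hi
    have := hW.col_lt w
    have := hW'.col_lt w
    grind
  card_lt_size _ hj := card_filter_union_lt_size h hi hti hW hW' hj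
  card_uncovered_le :=
    calc (uncovered I p q a b (W ∪ W')).card
        ≤ _ := Finset.card_le_card (uncovered_union_subset h hi W W')
      _ ≤ _ := (Finset.card_union_le _ _).trans (add_le_add_right (Finset.card_union_le _ _) _)
      _ ≤ _ := add_le_add_right (add_le_add hW.card_uncovered_le hW'.card_uncovered_le) _
      _ ≤ _ := card_add_card_reducedStaircase_le h hi hti

/-- If all sizes exceed one, a pivot in the top right corner lowers every size by one. Otherwise
some block has size one and contains no pivot, and it separates the corners before it from those
after it. -/
theorem exists_isPivotSet (h : IsAdmissible I p q a b t) : ∃ W, IsPivotSet I p q a b t W := by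
  induction hsum : ∑ i ∈ I, t i using Nat.strong_induction_on generalizing I p q t with
  | _ N ih =>
    subst hsum
    rcases I.eq_empty_or_nonempty with rfl | hI
    · exact ⟨∅, by constructor <;> simp [uncovered, staircase]⟩
    by_cases ht : ∀ i ∈ I, 1 < t i
    · have hlt : ∑ i ∈ I, (t i - 1) < ∑ i ∈ I, t i :=
        Finset.sum_lt_sum_of_nonempty hI fun i hi => Nat.sub_one_lt_of_lt (ht i hi)
      obtain ⟨W, hW⟩ := ih _ hlt (h.pred ht) rfl
      obtain ⟨i, hi⟩ := hI
      have hq : 0 < q := by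
        have := h.size_le_cols i hi
        have := ht i hi
        omega
      exact ⟨_, hW.insert_corner hq ht⟩
    · push Not at ht
      obtain ⟨i, hi, hti⟩ := ht
      have hti : t i = 1 := hti.antisymm (h.one_le_size i hi)
      have hlt : ∀ J ⊆ I, i ∉ J → ∑ j ∈ J, t j < ∑ j ∈ I, t j := fun J hJ hiJ =>
        Finset.sum_lt_sum_of_subset hJ hi hiJ (h.one_le_size i hi) fun j _ _ => zero_le
      obtain ⟨W, hW⟩ := ih _ (hlt _ (Finset.filter_subset _ I) (by simp)) (h.before hi hti) rfl
      obtain ⟨W', hW'⟩ := ih _ (hlt _ (Finset.filter_subset _ I) (by simp)) (h.after hi hti) rfl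
      exact ⟨_, hW.union h hi hti hW'⟩

end Staircases

section DependentPositions

variable {F : Type*} [Field F] {I : Finset ℕ} {p q : ℕ} {a b t : ℕ → ℕ} {M : ℕ → ℕ → F}

/-- The rows of the matrix `M` over `(p, a] × [b, q)` that depend on the rows above them. -/
noncomputable def dependentRows (M : ℕ → ℕ → F) (p q a b : ℕ) : Finset ℕ :=
  dependentIndices F id (fun x (y : Finset.Ico b q) => M x y) (Finset.Ioc p a)

/-- The columns of the matrix `M` over `(p, a] × [b, q)` that depend on the columns to their
right. -/
noncomputable def dependentCols (M : ℕ → ℕ → F) (p q a b : ℕ) : Finset ℕ :=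
  dependentIndices F OrderDual.toDual (fun y (x : Finset.Ioc p a) => M x y) (Finset.Ico b q)

/-- The positions lying in a dependent row and in a dependent column of the same block. -/
noncomputable def dependentPositions (M : ℕ → ℕ → F) (I : Finset ℕ) (p q : ℕ) (a b : ℕ → ℕ) :
    Finset (ℕ × ℕ) :=
  I.biUnion fun i => dependentRows M p q (a i) (b i) ×ˢ dependentCols M p q (a i) (b i)

lemma dependentPositions_subset_staircase :
    dependentPositions M I p q a b ⊆ staircase I p q a b :=
  Finset.biUnion_mono fun _ _ => Finset.product_subset_product
    (dependentIndices_subset _ _ _) (dependentIndices_subset _ _ _)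

lemma card_reducedStaircase_le_card_dependentPositions
    (hM : ∀ i ∈ I, MinorsVanish M (Finset.Ioc p (a i)) (Finset.Ico (b i) q) (t i)) :
    (reducedStaircase I p q a b t).card ≤ (dependentPositions M I p q a b).card := by
  refine (card_biUnion_product_le (fun i _ j _ => ?_) (fun i _ j _ => ?_) (fun i hi => ?_)
    fun i hi => ?_)
  · exact (le_total (a i + 1 - t i) (a j + 1 - t j)).imp Finset.Ioc_subset_Ioc_right
      Finset.Ioc_subset_Ioc_right
  · exact (le_total (b i + t i - 1) (b j + t j - 1)).symm.imp Finset.Ico_subset_Ico_left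
      Finset.Ico_subset_Ico_left
  · have hlt := card_lt_card_dependentIndices_add Function.injective_id (hM i hi)
    simp only [Nat.card_Ioc, dependentRows] at hlt ⊢
    omega
  · have hlt := card_lt_card_dependentIndices_add OrderDual.toDual.injective (hM i hi).transpose
    simp only [Nat.card_Ico, dependentCols] at hlt ⊢
    omega

lemma entry_mem_of_mem_dependent [Algebra K F] (E : IntermediateField K F) {a b x y : ℕ}
    (hx : x ∈ dependentRows M p q a b) (hy : y ∈ dependentCols M p q a b)
    (hE : ∀ u v, p < u → u ≤ x → y ≤ v → v < q → u < x ∨ y < v → M u v ∈ E) : M x y ∈ E := by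
  have hxmem := Finset.mem_Ioc.1 (dependentIndices_subset _ _ _ hx)
  have hymem := Finset.mem_Ico.1 (dependentIndices_subset _ _ _ hy)
  obtain ⟨l, hl⟩ := exists_eq_sum_of_mem_dependentIndices (M := M) (U := Finset.Ioo p x)
    hx fun u hu hlt => Finset.mem_Ioo.2 ⟨(Finset.mem_Ioc.1 hu).1, hlt⟩
  obtain ⟨k, hk⟩ := exists_eq_sum_of_mem_dependentIndices (M := fun v u => M u v)
    (U := Finset.Ioo y q) hy fun v hv hlt => Finset.mem_Ioo.2 ⟨hlt, (Finset.mem_Ico.1 hv).2⟩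
  simp only [Finset.mem_Ico, Finset.mem_Ioc] at hl hk
  refine entry_mem_of_dependent E (M := M) (U := Finset.Ioo p x) (V := Finset.Ioo y q)
    ?_ ?_ ?_ ⟨l, hl y hymem, ?_⟩ ⟨k, ?_⟩ <;> simp only [Finset.mem_Ioo]
  · exact fun u hu v hv => hE u v hu.1 hu.2.le hv.1.le hv.2 (Or.inl hu.2)
  · exact fun v hv => hE x v hxmem.1 le_rfl hv.1.le hv.2 (Or.inr hv.1)
  · exact fun u hu => hE u y hu.1 hu.2.le le_rfl hymem.2 (Or.inl hu.2)
  · exact fun v hv => hl v ⟨hymem.1.trans hv.1.le, hv.2⟩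
  · exact fun u hu => hk u ⟨hu.1, hu.2.le.trans hxmem.2⟩

lemma entry_mem_adjoin_of_mem_dependentPositions [Algebra K F] {V : Set (ℕ × ℕ)}
    (hV : (staircase I p q a b : Set (ℕ × ℕ)) ⊆ V) {d : ℕ × ℕ}
    (hd : d ∈ dependentPositions M I p q a b) :
    M d.1 d.2 ∈ IntermediateField.adjoin K ((fun e : V => M e.1.1 e.1.2) ''
      {e | positionRank e.1 < positionRank d}) := by
  obtain ⟨i, hi, hdi⟩ := Finset.mem_biUnion.1 hd
  obtain ⟨hrow, hcol⟩ := Finset.mem_product.1 hdi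
  have hrowmem := Finset.mem_Ioc.1 (dependentIndices_subset _ _ _ hrow)
  have hcolmem := Finset.mem_Ico.1 (dependentIndices_subset _ _ _ hcol)
  refine entry_mem_of_mem_dependent _ hrow hcol fun u v hpu hud hdv hvq hne => ?_
  have huv : (u, v) ∈ V :=
    hV (mem_staircase.2 ⟨i, hi, hpu, hud.trans hrowmem.2, hcolmem.1.trans hdv, hvq⟩)
  have hlt : u < d.1 ∨ u = d.1 ∧ d.2 < v := by omega
  exact IntermediateField.subset_adjoin K _ ⟨⟨(u, v), huv⟩, positionRank_lt_iff.2 hlt, rfl⟩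

theorem card_reducedStaircase_le_height_ker_aeval [Algebra K F] {V : Set (ℕ × ℕ)} [Finite V]
    (hV : (staircase I p q a b : Set (ℕ × ℕ)) ⊆ V)
    (hM : ∀ i ∈ I, MinorsVanish M (Finset.Ioc p (a i)) (Finset.Ico (b i) q) (t i)) :
    ((reducedStaircase I p q a b t).card : ℕ∞) ≤
      (RingHom.ker (aeval (R := K) fun e : V => M e.1.1 e.1.2)).height := by
  classical
  have hcard := card_reducedStaircase_le_card_dependentPositions hM
  have hsub : ∀ d ∈ dependentPositions M I p q a b, d ∈ V := fun d hd =>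
    hV (dependentPositions_subset_staircase hd)
  rw [← Finset.filter_true_of_mem hsub, ← Finset.card_subtype] at hcard
  refine (Nat.cast_le.2 hcard).trans (card_le_height_ker_aeval _ (fun e => positionRank e.1) _ ?_)
  exact fun d hd => entry_mem_adjoin_of_mem_dependentPositions hV (Finset.mem_subtype.1 hd)

end DependentPositions

section MixedLadderIdeal

variable {n s : ℕ} {a b t : ℕ → ℕ} {V : Set (ℕ × ℕ)}

lemma iUnion_ladderRegion_eq_coe_staircase (a b : ℕ → ℕ) (n s : ℕ) :
    ⋃ i ∈ Set.Icc 1 s, ladderRegion a b n i = staircase (Finset.Icc 1 s) 0 (n + 1) a b := by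
  ext e
  simp only [ladderRegion, Set.mem_iUnion, Set.mem_ofPred_eq, Set.mem_Icc, exists_prop,
    Finset.mem_coe, mem_staircase, Finset.mem_Icc, Nat.lt_add_one_iff, Nat.one_le_iff_ne_zero,
    Nat.pos_iff_ne_zero]

lemma mixedLadderIdeal_le_ker_aeval_iff {A : Type*} [CommRing A] [Algebra K A]
    (hV : (staircase (Finset.Icc 1 s) 0 (n + 1) a b : Set (ℕ × ℕ)) ⊆ V) (M : ℕ → ℕ → A) :
    mixedLadderIdeal K V a b t n s ≤ RingHom.ker (aeval (R := K) fun e : V => M e.1.1 e.1.2) ↔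
      ∀ i ∈ Finset.Icc 1 s,
        MinorsVanish M (Finset.Ioc 0 (a i)) (Finset.Ico (b i) (n + 1)) (t i) := by
  have hdet : ∀ {k} (r c : Fin k → ℕ) (h : ∀ x y, (r x, c y) ∈ V),
      aeval (R := K) (fun e : V => M e.1.1 e.1.2)
        (Matrix.of fun x y => (X ⟨(r x, c y), h x y⟩ : MvPolynomial V K)).det =
        (Matrix.of fun x y => M (r x) (c y)).det := by
    intro k r c h
    rw [AlgHom.map_det]
    congr 1
    ext x y
    simp
  simp only [mixedLadderIdeal, iSup₂_le_iff, Ideal.span_le, Set.mem_Icc, Finset.mem_Icc]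
  refine forall₂_congr fun i hi => ⟨fun h r c hr hc hrow hcol => ?_, ?_⟩
  · have hmem : ∀ x y, (r x, c y) ∈ ladderRegion a b n i := fun x y => by
      have := Finset.mem_Ioc.1 (hrow x)
      have := Finset.mem_Ico.1 (hcol y)
      exact ⟨by omega, by omega, by omega, by omega⟩
    have hmemV : ∀ x y, (r x, c y) ∈ V := fun x y => hV <| by
      rw [← iUnion_ladderRegion_eq_coe_staircase]
      exact Set.mem_biUnion hi (hmem x y)
    rw [← hdet r c hmemV]
    exact h ⟨r, c, hr, hc, fun x y => ⟨hmem x y, hmemV x y⟩, rfl⟩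
  · rintro h _ ⟨r, c, hr, hc, hmem, rfl⟩
    refine (hdet r c fun x y => (hmem x y).2).trans (h r c hr hc (fun x => ?_) fun y => ?_)
    · obtain ⟨h1, h2, -⟩ := (hmem x x).1
      exact Finset.mem_Ioc.2 ⟨h1, h2⟩
    · obtain ⟨-, -, h3, h4⟩ := (hmem y y).1
      exact Finset.mem_Ico.2 ⟨h3, Nat.lt_succ_of_le h4⟩

lemma exists_eq_ker_aeval_entry (P : Ideal (MvPolynomial V K)) [P.IsPrime] :
    ∃ M : ℕ → ℕ → P.ResidueField,
      P = RingHom.ker (aeval (R := K) fun e : V => M e.1.1 e.1.2) := by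
  classical
  let φ := IsScalarTower.toAlgHom K (MvPolynomial V K) P.ResidueField
  refine ⟨fun u v => if h : (u, v) ∈ V then φ (X ⟨(u, v), h⟩) else 0, ?_⟩
  have hφ : (aeval fun e : V => if h : (e.1.1, e.1.2) ∈ V then φ (X ⟨(e.1.1, e.1.2), h⟩) else 0) =
      φ := MvPolynomial.algHom_ext fun e => by simp
  rw [hφ]
  exact (Ideal.ker_algebraMap_residueField P).symm

theorem card_reducedStaircase_le_height_of_mixedLadderIdeal_le [Finite V]
    (hV : (staircase (Finset.Icc 1 s) 0 (n + 1) a b : Set (ℕ × ℕ)) ⊆ V)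
    (P : Ideal (MvPolynomial V K)) [P.IsPrime] (hP : mixedLadderIdeal K V a b t n s ≤ P) :
    ((reducedStaircase (Finset.Icc 1 s) 0 (n + 1) a b t).card : ℕ∞) ≤ P.height := by
  obtain ⟨M, hM⟩ := exists_eq_ker_aeval_entry P
  rw [hM] at hP ⊢
  exact card_reducedStaircase_le_height_ker_aeval hV
    ((mixedLadderIdeal_le_ker_aeval_iff hV M).1 hP)

theorem exists_isPrime_mixedLadderIdeal_le (h : IsAdmissible (Finset.Icc 1 s) 0 (n + 1) a b t) :
    ∃ P : Ideal (MvPolynomial (staircase (Finset.Icc 1 s) 0 (n + 1) a b : Set (ℕ × ℕ)) K),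
      P.IsPrime ∧ mixedLadderIdeal K _ a b t n s ≤ P ∧
        P.height ≤ (reducedStaircase (Finset.Icc 1 s) 0 (n + 1) a b t).card := by
  obtain ⟨W, hW⟩ := exists_isPivotSet h
  refine ⟨_, RingHom.ker_isPrime _,
    (mixedLadderIdeal_le_ker_aeval_iff subset_rfl (pivotMatrix K W)).2 fun i hi => ?_,
    (height_ker_aeval_pivotMatrix_le W _).trans (Nat.cast_le.2 hW.card_uncovered_le)⟩
  exact minorsVanish_pivotMatrix (fun x hx => (Finset.mem_Ioc.1 hx).2)
    (fun y hy => (Finset.mem_Ico.1 hy).1) (hW.card_lt_size i hi)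

theorem idealHeight_mixedLadderIdeal_staircase
    (h : IsAdmissible (Finset.Icc 1 s) 0 (n + 1) a b t) :
    idealHeight (mixedLadderIdeal K (staircase (Finset.Icc 1 s) 0 (n + 1) a b) a b t n s) =
      (reducedStaircase (Finset.Icc 1 s) 0 (n + 1) a b t).card := by
  refine le_antisymm ?_ (le_iInf₂ fun P hP => ?_)
  · obtain ⟨P, hPprime, hP, hheight⟩ := exists_isPrime_mixedLadderIdeal_le (K := K) h
    refine (iInf₂_le ⟨P, hPprime⟩ hP).trans ?_
    rwa [← PrimeSpectrum.height_eq_orderHeight]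
  · rw [← PrimeSpectrum.height_eq_orderHeight]
    exact card_reducedStaircase_le_height_of_mixedLadderIdeal_le subset_rfl P.asIdeal hP

theorem mixedLadderIdeal_height_general
    (hmono : ∀ i, 1 ≤ i → i < s → a i ≤ a (i + 1) ∧ b i ≤ b (i + 1))
    (hsize : ∀ i ∈ Set.Icc 1 s, 1 ≤ t i ∧ t i ≤ a i ∧ b i + t i ≤ n + 1)
    (hgap : ∀ i, 1 ≤ i → i < s →
      (b i : ℤ) - b (i + 1) ≤ t (i + 1) - t i ∧ (t (i + 1) : ℤ) - t i ≤ a (i + 1) - a i) :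
    idealHeight (mixedLadderIdeal K (⋃ i ∈ Set.Icc 1 s, ladderRegion a b n i) a b t n s) =
      ((⋃ i ∈ Set.Icc 1 s,
        ladderRegion (fun i => a i - t i + 1) (fun i => b i + t i - 1) n i).ncard : ℕ∞) := by
  have hreduced : ⋃ i ∈ Set.Icc 1 s,
      ladderRegion (fun i => a i - t i + 1) (fun i => b i + t i - 1) n i =
      reducedStaircase (Finset.Icc 1 s) 0 (n + 1) a b t := by
    rw [reducedStaircase, ← iUnion_ladderRegion_eq_coe_staircase]
    refine Set.iUnion₂_congr fun i hi => ?_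
    simp only [ladderRegion, Nat.sub_add_comm (hsize i hi).2.1]
  rw [hreduced, Set.ncard_coe_finset, iUnion_ladderRegion_eq_coe_staircase]
  refine idealHeight_mixedLadderIdeal_staircase (isAdmissible_Icc ?_ ?_ fun i hi => ?_)
  · exact fun i hi => hmono i (Finset.mem_Ico.1 hi).1 (Finset.mem_Ico.1 hi).2
  · exact fun i hi => hgap i (Finset.mem_Ico.1 hi).1 (Finset.mem_Ico.1 hi).2
  · have := hsize i (Finset.mem_Icc.1 hi)
    omega

end MixedLadderIdeal

/-- Height formula for mixed ladder determinantal ideals: with `L̃` the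
one-sided ladder with lower outside corners `(a_i - t_i + 1, b_i + t_i - 1)`, the height of
`I_t(L)` in `K[L]` is the cardinality `|L̃|`. -/
theorem mixedLadderIdeal_height (m n s : ℕ) (hm : 1 ≤ m) (hmn : m ≤ n) (hs : 1 ≤ s)
    (L : Set (ℕ × ℕ)) (a b t : ℕ → ℕ)
    (hLsub : L ⊆ Set.Icc 1 m ×ˢ Set.Icc 1 n)
    (hcorner : ((1 : ℕ), n) ∈ L)
    (hladder : ∀ i h j' k' : ℕ, i < h → k' < j' →
      (i, j') ∈ L → (h, k') ∈ L → (i, k') ∈ L ∧ (h, j') ∈ L)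
    (hrange : ∀ i ∈ Set.Icc 1 s, 1 ≤ a i ∧ a i ≤ m ∧ 1 ≤ b i ∧ b i ≤ n)
    (hmono : ∀ i, 1 ≤ i → i < s → a i ≤ a (i + 1) ∧ b i ≤ b (i + 1))
    (hborder : ∀ i ∈ Set.Icc 1 s, (a i, b i) ∈ L ∧ (a i + 1, b i - 1) ∉ L)
    (hdecomp : L = ⋃ i ∈ Set.Icc 1 s, ladderRegion a b n i)
    (hcorners : ∀ p ∈ L, (p.1 + 1, p.2) ∉ L → (p.1, p.2 - 1) ∉ L →
      ∃ i ∈ Set.Icc 1 s, p = (a i, b i))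
    (hsize : ∀ i ∈ Set.Icc 1 s, 1 ≤ t i ∧ t i ≤ min (a i) (m - b i + 1))
    (hgap : ∀ i, 2 ≤ i → i ≤ s →
      ((b (i - 1) : ℤ) - b i < (t i : ℤ) - t (i - 1)) ∧
      ((t i : ℤ) - t (i - 1) < (a i : ℤ) - a (i - 1))) :
    idealHeight (mixedLadderIdeal K L a b t n s) =
      ((⋃ i ∈ Set.Icc 1 s,
        ladderRegion (fun i => a i - t i + 1) (fun i => b i + t i - 1) n i).ncard : ℕ∞) := by
  have hsize' : ∀ i ∈ Set.Icc 1 s, 1 ≤ t i ∧ t i ≤ a i ∧ b i + t i ≤ n + 1 := fun i hi => by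
    have := hsize i hi
    have := hrange i hi
    omega
  rw [hdecomp]
  exact mixedLadderIdeal_height_general hmono hsize' fun i hi his =>
    (hgap (i + 1) (by omega) his).imp le_of_lt le_of_lt
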